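/- arXiv:1009.0094 — 2 statements merged into one kernel-verified Lean document; each statement's English description precedes it below -/
import Mathlib

section
/- Let H and K be complex Hilbert spaces, let M ⊆ B(H) and N ⊆ B(K) be von Neumann algebras, and let Φ : M → N be a *-isomorphism. Suppose that (E_i)_{i∈I} is a net of orthogonal projections in M indexed by a directed set I which is increasing (E_i E_j = E_j = E_j E_i whenever j ≤ i), such that D := ⋃_{i∈I} E_i(H) is dense in H; that W is a closed densely defined (possibly unbounded) linear operator on H whose domain contains D and such that for every i ∈ I the operator W E_i is a bounded self-adjoint operator belonging to M; and that D' := ⋃_{i∈I} Φ(E_i)(K) is dense in K. Then the assignment B(k) := Φ(W E_i)(k) for k ∈ Φ(E_i)(K) gives a well-defined linear operator B with domain D' (independent of the choice of i), the operator B is closable, and the closure of B is a self-adjoint operator on K. -/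
/-! For `j ≤ i` the operators `A i = W E i` satisfy `E i * E j = E j` and `A i * E j = A j`, and `Φ`
preserves these relations. In `K` they make the restrictions of `Φ (A i)` to the ranges of
`p i := Φ (E i)` an increasing family of operators, whose union `B` is symmetric. If `y ∈ dom B†`,
then `p i y ∈ dom B` with `B (p i y) = p i (B† y)`; since `p i → 1` strongly, `(y, B† y)` lies in
the closure of the graph of `B`. Thus `B†` is the closure of `B`, and it is self-adjoint. -/

section UnboundedOperators

open scoped LinearPMap

variable {𝕜 E F : Type*} [RCLike 𝕜] [NormedAddCommGroup E] [InnerProductSpace 𝕜 E]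
  [NormedAddCommGroup F] [InnerProductSpace 𝕜 F]

theorem submodule_adjoint_topologicalClosure (g : Submodule 𝕜 (E × F)) :
    g.topologicalClosure.adjoint = g.adjoint := by
  ext ⟨y, z⟩
  simp only [Submodule.mem_adjoint_iff]
  refine ⟨fun h u v huv => h u v (g.le_topologicalClosure huv), fun h u v huv => ?_⟩
  have hclosed : IsClosed {q : E × F | inner 𝕜 q.2 y - inner 𝕜 q.1 z = 0} :=
    isClosed_eq (by fun_prop) continuous_const
  exact closure_minimal (fun q hq => h q.1 q.2 hq) hclosed huv

variable [CompleteSpace E]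

theorem adjoint_closure_eq_adjoint {T : E →ₗ.[𝕜] F} (hT : Dense (T.domain : Set E))
    (hclos : T.IsClosable) : T.closure† = T† := by
  have hclosure : Dense (T.closure.domain : Set E) := hT.mono T.le_closure.1
  apply LinearPMap.eq_of_eq_graph
  rw [LinearPMap.adjoint_graph_eq_graph_adjoint hclosure, ← hclos.graph_closure_eq_closure_graph,
    submodule_adjoint_topologicalClosure, LinearPMap.adjoint_graph_eq_graph_adjoint hT]

theorem isClosable_of_isFormalAdjoint {T : E →ₗ.[𝕜] F} {S : F →ₗ.[𝕜] E}
    (hT : Dense (T.domain : Set E)) (h : T.IsFormalAdjoint S) : S.IsClosable :=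
  (LinearPMap.adjoint_isClosed hT).isClosable.leIsClosable (h.le_adjoint hT)

theorem isSelfAdjoint_closure_of_adjoint_graph_le {T : E →ₗ.[𝕜] E}
    (hT : Dense (T.domain : Set E)) (hsymm : T.IsFormalAdjoint T)
    (hle : T†.graph ≤ T.graph.topologicalClosure) : IsSelfAdjoint T.closure := by
  have hclos : T.IsClosable := isClosable_of_isFormalAdjoint hT hsymm
  have hge : T.graph.topologicalClosure ≤ T†.graph :=
    T.graph.topologicalClosure_minimal (LinearPMap.le_graph_of_le (hsymm.le_adjoint hT))
      (LinearPMap.adjoint_isClosed hT)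
  have hadj : T† = T.closure := LinearPMap.eq_of_eq_graph <|
    (hle.antisymm hge).trans hclos.graph_closure_eq_closure_graph
  rw [LinearPMap.isSelfAdjoint_def, adjoint_closure_eq_adjoint hT hclos, hadj]

theorem tendsto_apply_of_isStarProjection {I : Type*} [Preorder I] {p : I → E →L[𝕜] E}
    (hp : ∀ i, IsStarProjection (p i)) (hmono : Monotone fun i => (p i).range)
    (hdense : Dense (⋃ i, Set.range (p i))) (x : E) :
    Filter.Tendsto (fun i => p i x) Filter.atTop (nhds x) := by
  choose _ hstar using fun i => isStarProjection_iff_eq_starProjection_range.mp (hp i)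
  have hsup : ⊤ ≤ (⨆ i, (p i).range).topologicalClosure := by
    have hle : ⋃ i, Set.range (p i) ⊆ ((⨆ i, (p i).range : Submodule 𝕜 E) : Set E) :=
      Set.iUnion_subset fun i => le_iSup (fun i => (p i).range) i
    exact (Submodule.dense_iff_topologicalClosure_eq_top.mp (hdense.mono hle)).ge
  refine (Submodule.starProjection_tendsto_self _ hmono x hsup).congr fun i => ?_
  rw [← hstar i]

end UnboundedOperators

/-- `p` is an increasing family of projections and `a` a compatible family of self-adjoint elements:
`a i` plays the role of the truncation `W * p i` of one, possibly unbounded, operator `W`, whose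
existence is encoded by `a i * p j = a j` for `j ≤ i`. -/
structure IsTruncationNet {R I : Type*} [Mul R] [Star R] [LE I] (p a : I → R) : Prop where
  isStarProjection (i : I) : IsStarProjection (p i)
  isSelfAdjoint (i : I) : IsSelfAdjoint (a i)
  proj_mul_proj {i j : I} (hji : j ≤ i) : p i * p j = p j
  mul_proj {i j : I} (hji : j ≤ i) : a i * p j = a j

namespace IsTruncationNet

theorem map {R S I G : Type*} [Mul R] [Star R] [Mul S] [Star S] [LE I] [FunLike G R S]
    [MulHomClass G R S] [StarHomClass G R S] {p a : I → R} (h : IsTruncationNet p a) (φ : G) :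
    IsTruncationNet (fun i => φ (p i)) (fun i => φ (a i)) where
  isStarProjection i := (h.isStarProjection i).map φ
  isSelfAdjoint i := (h.isSelfAdjoint i).map φ
  proj_mul_proj hji := by rw [← map_mul, h.proj_mul_proj hji]
  mul_proj hji := by rw [← map_mul, h.mul_proj hji]

theorem codRestrict {R I C : Type*} [Mul R] [Star R] [LE I] [SetLike C R] [MulMemClass C R]
    [StarMemClass C R] {S : C} {p a : I → R} (h : IsTruncationNet p a) (hp : ∀ i, p i ∈ S)
    (ha : ∀ i, a i ∈ S) :
    IsTruncationNet (fun i => (⟨p i, hp i⟩ : S)) (fun i => (⟨a i, ha i⟩ : S)) where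
  isStarProjection i :=
    ⟨Subtype.ext (h.isStarProjection i).isIdempotentElem,
      Subtype.ext (h.isStarProjection i).isSelfAdjoint⟩
  isSelfAdjoint i := Subtype.ext (h.isSelfAdjoint i)
  proj_mul_proj hji := Subtype.ext (h.proj_mul_proj hji)
  mul_proj hji := Subtype.ext (h.mul_proj hji)

open scoped LinearPMap

variable {𝕜 E I : Type*} [RCLike 𝕜] [NormedAddCommGroup E] [InnerProductSpace 𝕜 E]
  [CompleteSpace E] [Preorder I] {p a : I → E →L[𝕜] E}

theorem proj_apply_proj (h : IsTruncationNet p a) {i j : I} (hji : j ≤ i) (x : E) :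
    p i (p j x) = p j x :=
  DFunLike.congr_fun (h.proj_mul_proj hji) x

theorem apply_proj (h : IsTruncationNet p a) {i j : I} (hji : j ≤ i) (x : E) :
    a i (p j x) = a j x :=
  DFunLike.congr_fun (h.mul_proj hji) x

theorem monotone_range (h : IsTruncationNet p a) : Monotone fun i => (p i).range := by
  rintro j i hji _ ⟨x, rfl⟩
  exact ⟨p j x, h.proj_apply_proj hji x⟩

theorem monotone_toPMap (h : IsTruncationNet p a) :
    Monotone fun i => (a i : E →ₗ[𝕜] E).toPMap (p i).range := by
  refine fun j i hji => ⟨h.monotone_range hji, ?_⟩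
  rintro ⟨_, x, rfl⟩ ⟨_, _⟩ rfl
  exact (h.apply_proj le_rfl x).trans (h.apply_proj hji x).symm

variable [IsDirectedOrder I]

/-- The operator with domain `⋃ i, range (p i)` that agrees with `a i` on the range of `p i`,
obtained by gluing the restrictions `a i |_ range (p i)`. -/
noncomputable def limit (h : IsTruncationNet p a) : E →ₗ.[𝕜] E :=
  LinearPMap.sSup (Set.range fun i => (a i : E →ₗ[𝕜] E).toPMap (p i).range)
    h.monotone_toPMap.directed_le.directedOn_range

theorem toPMap_le_limit (h : IsTruncationNet p a) (i : I) :
    (a i : E →ₗ[𝕜] E).toPMap (p i).range ≤ h.limit :=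
  LinearPMap.le_sSup _ (Set.mem_range_self i)

theorem limit_apply (h : IsTruncationNet p a) {i : I} (x : h.limit.domain)
    (hx : (x : E) ∈ Set.range (p i)) : h.limit x = a i x :=
  ((h.toPMap_le_limit i).2 (x := ⟨x, hx⟩) rfl).symm

theorem mem_graph_limit (h : IsTruncationNet p a) (i : I) (x : E) :
    (p i x, a i x) ∈ h.limit.graph := by
  refine LinearPMap.le_graph_of_le (h.toPMap_le_limit i) ?_
  exact (LinearPMap.mem_graph_iff _).mpr ⟨⟨p i x, x, rfl⟩, rfl, h.apply_proj le_rfl x⟩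

theorem apply_eq_proj_of_mem_adjoint_graph (h : IsTruncationNet p a)
    (hdense : Dense (h.limit.domain : Set E)) {y z : E} (hyz : (y, z) ∈ h.limit†.graph) (i : I) :
    a i y = p i z := by
  rw [LinearPMap.adjoint_graph_eq_graph_adjoint hdense, Submodule.mem_adjoint_iff] at hyz
  refine ext_inner_left 𝕜 fun x => ?_
  calc inner 𝕜 x (a i y) = inner 𝕜 (a i x) y := ((h.isSelfAdjoint i).isSymmetric x y).symm
    _ = inner 𝕜 (p i x) z := sub_eq_zero.mp (hyz _ _ (h.mem_graph_limit i x))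
    _ = inner 𝕜 x (p i z) := (h.isStarProjection i).isSelfAdjoint.isSymmetric x z

variable [Nonempty I]

theorem coe_domain_limit (h : IsTruncationNet p a) :
    (h.limit.domain : Set E) = ⋃ i, Set.range (p i) := by
  ext x
  rw [SetLike.mem_coe, limit, LinearPMap.mem_domain_sSup_iff (Set.range_nonempty _),
    Set.exists_range_iff, Set.mem_iUnion]
  rfl

theorem isFormalAdjoint_limit (h : IsTruncationNet p a) : h.limit.IsFormalAdjoint h.limit := by
  intro x y
  obtain ⟨i, hx⟩ := Set.mem_iUnion.mp (h.coe_domain_limit.subset x.2)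
  obtain ⟨j, hy⟩ := Set.mem_iUnion.mp (h.coe_domain_limit.subset y.2)
  obtain ⟨l, hil, hjl⟩ := exists_ge_ge i j
  rw [h.limit_apply x (h.monotone_range hil hx), h.limit_apply y (h.monotone_range hjl hy)]
  exact (h.isSelfAdjoint l).isSymmetric x y

theorem dense_domain_limit (h : IsTruncationNet p a) (hdense : Dense (⋃ i, Set.range (p i))) :
    Dense (h.limit.domain : Set E) :=
  h.coe_domain_limit ▸ hdense

theorem isClosable_limit (h : IsTruncationNet p a) (hdense : Dense (⋃ i, Set.range (p i))) :
    h.limit.IsClosable :=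
  isClosable_of_isFormalAdjoint (h.dense_domain_limit hdense) h.isFormalAdjoint_limit

theorem adjoint_graph_limit_le (h : IsTruncationNet p a) (hdense : Dense (⋃ i, Set.range (p i))) :
    h.limit†.graph ≤ h.limit.graph.topologicalClosure := by
  rintro ⟨y, z⟩ hyz
  have htendsto : Filter.Tendsto (fun i => (p i y, p i z)) Filter.atTop (nhds (y, z)) :=
    (tendsto_apply_of_isStarProjection h.isStarProjection h.monotone_range hdense y).prodMk_nhds
      (tendsto_apply_of_isStarProjection h.isStarProjection h.monotone_range hdense z)
  refine mem_closure_of_tendsto htendsto (Filter.Eventually.of_forall fun i => ?_)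
  rw [← h.apply_eq_proj_of_mem_adjoint_graph (h.dense_domain_limit hdense) hyz i]
  exact h.mem_graph_limit i y

theorem isSelfAdjoint_closure_limit (h : IsTruncationNet p a)
    (hdense : Dense (⋃ i, Set.range (p i))) : IsSelfAdjoint h.limit.closure :=
  isSelfAdjoint_closure_of_adjoint_graph_le (h.dense_domain_limit hdense) h.isFormalAdjoint_limit
    (h.adjoint_graph_limit_le hdense)

end IsTruncationNet

theorem isTruncationNet_of_linearPMap {𝕜 H I : Type*} [RCLike 𝕜] [NormedAddCommGroup H]
    [InnerProductSpace 𝕜 H] [CompleteSpace H] [LE I] {E A : I → H →L[𝕜] H}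
    (hE : ∀ i, IsStarProjection (E i)) (hEmono : ∀ i j, j ≤ i → E i * E j = E j)
    (W : H →ₗ.[𝕜] H) (hWdom : ∀ i x, E i x ∈ W.domain) (hA : ∀ i, IsSelfAdjoint (A i))
    (hAW : ∀ i x, A i x = W ⟨E i x, hWdom i x⟩) : IsTruncationNet E A where
  isStarProjection := hE
  isSelfAdjoint := hA
  proj_mul_proj := hEmono _ _
  mul_proj {i j} hji := by
    have hEij (x : H) : E i (E j x) = E j x := DFunLike.congr_fun (hEmono i j hji) x
    ext x
    simp only [mul_apply_eq_comp, hAW, hEij]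

theorem statement0_general {𝕜 H K : Type*} [RCLike 𝕜]
    [NormedAddCommGroup H] [InnerProductSpace 𝕜 H] [CompleteSpace H]
    [NormedAddCommGroup K] [InnerProductSpace 𝕜 K] [CompleteSpace K]
    {M : NonUnitalStarSubalgebra 𝕜 (H →L[𝕜] H)} (Φ : M →⋆ₙₐ[𝕜] (K →L[𝕜] K))
    {I : Type*} [Preorder I] [IsDirectedOrder I] [Nonempty I]
    {E A : I → H →L[𝕜] H} (hEmem : ∀ i, E i ∈ M) (hE : ∀ i, IsStarProjection (E i))
    (hEmono : ∀ i j, j ≤ i → E i * E j = E j)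
    (W : H →ₗ.[𝕜] H) (hWdom : ∀ i x, E i x ∈ W.domain)
    (hAmem : ∀ i, A i ∈ M) (hA : ∀ i, IsSelfAdjoint (A i))
    (hAW : ∀ i x, A i x = W ⟨E i x, hWdom i x⟩)
    (hdense : Dense (⋃ i, Set.range (Φ ⟨E i, hEmem i⟩))) :
    ∃ B : K →ₗ.[𝕜] K,
      (B.domain : Set K) = (⋃ i, Set.range (Φ ⟨E i, hEmem i⟩)) ∧
      (∀ (i : I) (k : B.domain),
        (k : K) ∈ Set.range (Φ ⟨E i, hEmem i⟩) → B k = Φ ⟨A i, hAmem i⟩ k) ∧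
      B.IsClosable ∧ IsSelfAdjoint B.closure := by
  have hEA : IsTruncationNet E A := isTruncationNet_of_linearPMap hE hEmono W hWdom hA hAW
  have hM : IsTruncationNet (fun i => (⟨E i, hEmem i⟩ : M)) (fun i => ⟨A i, hAmem i⟩) :=
    hEA.codRestrict hEmem hAmem
  have hK := hM.map Φ
  exact ⟨hK.limit, hK.coe_domain_limit, fun _ => hK.limit_apply, hK.isClosable_limit hdense,
    hK.isSelfAdjoint_closure_limit hdense⟩

/-- Lemma on extending a `*`-isomorphism to certain unbounded operators.
Let `M ⊆ B(H)` and `N ⊆ B(K)` be von Neumann algebras and `Φ : M → N` a `*`-isomorphism.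
Given an increasing net `(E i)` of orthogonal projections in `M` whose ranges have dense union,
and a closed densely defined operator `W` on `H` whose domain contains all the ranges of the
`E i` and such that each `W ∘ E i` is (given by) a bounded self-adjoint operator `A i ∈ M`,
and such that the union of the ranges of the `Φ (E i)` is dense in `K`, the assignment
`B k := Φ (W E i) k` for `k ∈ range (Φ (E i))` gives a well-defined linear operator with
domain `⋃ i, range (Φ (E i))`, which is closable with self-adjoint closure. -/
theorem statement0
    {H K : Type} [NormedAddCommGroup H] [InnerProductSpace ℂ H] [CompleteSpace H]
    [NormedAddCommGroup K] [InnerProductSpace ℂ K] [CompleteSpace K]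
    (M : VonNeumannAlgebra H) (N : VonNeumannAlgebra K)
    (Φ : M.toStarSubalgebra ≃⋆ₐ[ℂ] N.toStarSubalgebra)
    {I : Type} [Preorder I] [IsDirected I (· ≤ ·)] [Nonempty I]
    (E : I → H →L[ℂ] H) (hEmem : ∀ i, E i ∈ M.toStarSubalgebra)
    (hEsa : ∀ i, IsSelfAdjoint (E i)) (hEidem : ∀ i, E i * E i = E i)
    (hEmono : ∀ i j, j ≤ i → E i * E j = E j ∧ E j * E i = E j)
    (hD : Dense (⋃ i, Set.range (E i) : Set H))
    (W : H →ₗ.[ℂ] H) (hWclosed : W.IsClosed) (hWdense : Dense (W.domain : Set H))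
    (hWdom : ∀ (i : I) (x : H), E i x ∈ W.domain)
    (A : I → H →L[ℂ] H) (hAmem : ∀ i, A i ∈ M.toStarSubalgebra)
    (hAsa : ∀ i, IsSelfAdjoint (A i))
    (hAW : ∀ (i : I) (x : H), A i x = W ⟨E i x, hWdom i x⟩)
    (hD' : Dense (⋃ i,
      Set.range ((Φ ⟨E i, hEmem i⟩ : N.toStarSubalgebra) : K →L[ℂ] K) : Set K)) :
    ∃ B : K →ₗ.[ℂ] K,
      (B.domain : Set K)
          = (⋃ i, Set.range ((Φ ⟨E i, hEmem i⟩ : N.toStarSubalgebra) : K →L[ℂ] K)) ∧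
      (∀ (i : I) (k : B.domain),
        (k : K) ∈ Set.range ((Φ ⟨E i, hEmem i⟩ : N.toStarSubalgebra) : K →L[ℂ] K) →
        B k = ((Φ ⟨A i, hAmem i⟩ : N.toStarSubalgebra) : K →L[ℂ] K) (k : K)) ∧
      B.IsClosable ∧ IsSelfAdjoint B.closure :=
  statement0_general (M := M.toNonUnitalStarSubalgebra)
    (N.toStarSubalgebra.subtype.toNonUnitalStarAlgHom.comp Φ.toNonUnitalStarAlgHom) hEmem
    (fun i => ⟨hEidem i, hEsa i⟩) (fun i j hji => (hEmono i j hji).1) W hWdom hAmem hAsa hAW hD'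
end

section
/- Let H and K be complex Hilbert spaces, M ⊆ B(H) and N ⊆ B(K) von Neumann algebras, Φ : M → N a *-isomorphism, and (E_i)_{i∈I} an increasing net of orthogonal projections in M (E_i E_j = E_j whenever j ≤ i) such that ⋃_{i∈I} E_i(H) is dense in H and ⋃_{i∈I} Φ(E_i)(K) is dense in K. Suppose W is a bounded operator defined on all of H such that W E_i is a bounded self-adjoint operator belonging to M for every i ∈ I. Then W belongs to M, and for every k ∈ Φ(E_i)(K) one has Φ(W E_i)(k) = Φ(W)(k); consequently the closable operator B defined on ⋃_{i∈I} Φ(E_i)(K) by B(k) := Φ(W E_i)(k) for k ∈ Φ(E_i)(K) has closure equal to the bounded operator Φ(W). -/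
/-!
Since `M` is its own double commutant, `W ∈ M` follows once `W` commutes with every `T` in the
commutant. Such a `T` commutes with `E i` and with `W * E i`, so `T * W` and `W * T` agree on the
ranges of the `E i`, which span a dense subspace. Multiplicativity of `Φ` then gives
`Φ (W * E i) * Φ (E i) = Φ W * Φ (E i)`, so `B` is a densely defined restriction of the bounded
operator `Φ W`. The graph of a bounded operator is closed, and it lies in the closure of the graph
of any densely defined restriction.
-/

section Operators

variable {R V : Type*} [Semiring R] [AddCommMonoid V] [Module R V] [TopologicalSpace V]

theorem mem_centralizer_of_forall_mul_mem_centralizer [T2Space V] {ι : Sort*}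
    {S : Set (V →L[R] V)} {E : ι → V →L[R] V} {W : V →L[R] V}
    (hdense : Dense (Submodule.span R (⋃ i, Set.range (E i)) : Set V))
    (hE : ∀ i, E i ∈ S.centralizer) (hWE : ∀ i, W * E i ∈ S.centralizer) :
    W ∈ S.centralizer := by
  intro T hT
  refine ContinuousLinearMap.ext_on hdense fun x hx ↦ ?_
  obtain ⟨i, y, rfl⟩ := Set.mem_iUnion.1 hx
  have hcomm : T * W * E i = W * T * E i := by
    rw [mul_assoc, hWE i T hT, mul_assoc, ← hE i T hT, mul_assoc]
  exact DFunLike.congr_fun hcomm y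

theorem map_mul_apply_of_mem_range {A : Type*} [Semigroup A] (Φ : A →ₙ* (V →L[R] V)) (w : A)
    {e : A} (he : IsIdempotentElem e) {k : V} (hk : k ∈ Set.range (Φ e)) :
    Φ (w * e) k = Φ w k := by
  obtain ⟨y, rfl⟩ := hk
  have hmul : Φ (w * e) * Φ e = Φ w * Φ e := by
    rw [← map_mul, ← map_mul, mul_assoc, he.eq]
  exact DFunLike.congr_fun hmul y

end Operators

theorem mem_vonNeumannAlgebra_of_forall_mul_mem {H : Type*} [NormedAddCommGroup H]
    [InnerProductSpace ℂ H] [CompleteSpace H] (M : VonNeumannAlgebra H) {ι : Sort*}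
    {E : ι → H →L[ℂ] H} {W : H →L[ℂ] H}
    (hdense : Dense (Submodule.span ℂ (⋃ i, Set.range (E i)) : Set H))
    (hE : ∀ i, E i ∈ M) (hWE : ∀ i, W * E i ∈ M) : W ∈ M :=
  M.centralizer_centralizer.le <| mem_centralizer_of_forall_mul_mem_centralizer hdense
    (fun i ↦ M.centralizer_centralizer.ge (hE i)) (fun i ↦ M.centralizer_centralizer.ge (hWE i))

section Closure

variable {R V V' : Type*} [CommRing R] [AddCommGroup V] [Module R V] [TopologicalSpace V]
  [AddCommGroup V'] [Module R V'] [TopologicalSpace V']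

theorem isClosed_toPMap_top [T2Space V'] (f : V →L[R] V') :
    ((f : V →ₗ[R] V').toPMap ⊤).IsClosed := by
  have hgraph : (((f : V →ₗ[R] V').toPMap ⊤).graph : Set (V × V')) = {p | f p.1 = p.2} := by
    ext p
    simp
  rw [LinearPMap.IsClosed, hgraph]
  exact isClosed_eq (f.continuous.comp continuous_fst) continuous_snd

variable [TopologicalSpace R] [ContinuousAdd V] [ContinuousAdd V'] [ContinuousSMul R V]
  [ContinuousSMul R V'] {f : V →L[R] V'} {B : V →ₗ.[R] V'}

theorem graph_toPMap_top_le_topologicalClosure_graph (hB : B ≤ (f : V →ₗ[R] V').toPMap ⊤)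
    (hdense : Dense (B.domain : Set V)) :
    ((f : V →ₗ[R] V').toPMap ⊤).graph ≤ B.graph.topologicalClosure := by
  intro p hp
  obtain ⟨x, rfl⟩ := (LinearPMap.mem_graph_iff' _).1 hp
  refine map_mem_closure (f := fun k ↦ (k, f k)) (continuous_id.prodMk f.continuous) (hdense x)
    fun k hk ↦ ?_
  have hBk : B ⟨k, hk⟩ = f k := hB.2 (y := ⟨k, trivial⟩) rfl
  exact B.mem_graph_iff'.2 ⟨⟨k, hk⟩, congrArg (k, ·) hBk⟩

theorem isClosable_of_le_toPMap_top [T2Space V'] (hB : B ≤ (f : V →ₗ[R] V').toPMap ⊤) :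
    B.IsClosable :=
  (isClosed_toPMap_top f).isClosable.leIsClosable hB

theorem closure_eq_toPMap_top [T2Space V'] (hB : B ≤ (f : V →ₗ[R] V').toPMap ⊤)
    (hdense : Dense (B.domain : Set V)) : B.closure = (f : V →ₗ[R] V').toPMap ⊤ := by
  refine LinearPMap.eq_of_eq_graph ?_
  rw [← (isClosable_of_le_toPMap_top hB).graph_closure_eq_closure_graph]
  exact (Submodule.topologicalClosure_minimal _ (LinearPMap.le_graph_of_le hB)
    (isClosed_toPMap_top f)).antisymm (graph_toPMap_top_le_topologicalClosure_graph hB hdense)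

end Closure

theorem statement1_general {H K : Type*} [NormedAddCommGroup H] [InnerProductSpace ℂ H]
    [CompleteSpace H] [AddCommGroup K] [Module ℂ K] [TopologicalSpace K] [ContinuousAdd K]
    [ContinuousSMul ℂ K] [T2Space K] (M : VonNeumannAlgebra H)
    (Φ : M.toStarSubalgebra →ₙ* (K →L[ℂ] K)) {ι : Sort*} (E : ι → M.toStarSubalgebra)
    (hE : ∀ i, IsIdempotentElem (E i))
    (hD : Dense (Submodule.span ℂ (⋃ i, Set.range (E i : H →L[ℂ] H)) : Set H))
    (hD' : Dense (Submodule.span ℂ (⋃ i, Set.range (Φ (E i))) : Set K))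
    (W : H →L[ℂ] H) (hWE : ∀ i, W * E i ∈ M.toStarSubalgebra) :
    ∃ hW : W ∈ M.toStarSubalgebra,
      (∀ i, ∀ k ∈ Set.range (Φ (E i)), Φ ⟨W * E i, hWE i⟩ k = Φ ⟨W, hW⟩ k) ∧
      ∀ B : K →ₗ.[ℂ] K, B.domain = Submodule.span ℂ (⋃ i, Set.range (Φ (E i))) →
        (∀ i, ∀ k : B.domain, (k : K) ∈ Set.range (Φ (E i)) → B k = Φ ⟨W * E i, hWE i⟩ k) →
        B.IsClosable ∧ B.closure = (Φ ⟨W, hW⟩ : K →ₗ[ℂ] K).toPMap ⊤ := by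
  have hW : W ∈ M.toStarSubalgebra :=
    mem_vonNeumannAlgebra_of_forall_mul_mem M hD (fun i ↦ (E i).2) hWE
  have hΦ : ∀ i, ∀ k ∈ Set.range (Φ (E i)), Φ ⟨W * E i, hWE i⟩ k = Φ ⟨W, hW⟩ k :=
    fun i _ ↦ map_mul_apply_of_mem_range Φ ⟨W, hW⟩ (hE i)
  refine ⟨hW, hΦ, fun B hdom hB ↦ ?_⟩
  have hBW : B ≤ (Φ ⟨W, hW⟩ : K →ₗ[ℂ] K).toPMap ⊤ := by
    refine LinearPMap.le_of_eqLocus_ge (hdom.trans_le (Submodule.span_le.2 fun k hk ↦ ?_))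
    have hkB : k ∈ B.domain := hdom ▸ Submodule.subset_span hk
    obtain ⟨i, hi⟩ := Set.mem_iUnion.1 hk
    exact ⟨hkB, trivial, (hB i ⟨k, hkB⟩ hi).trans (hΦ i k hi)⟩
  exact ⟨isClosable_of_le_toPMap_top hBW, closure_eq_toPMap_top hBW (hdom ▸ hD')⟩

/-- In the setting of the extension lemma, if `W` is a bounded operator
defined on all of `H` with each `W * E i` a bounded self-adjoint member of `M`, then `W ∈ M`,
`Φ (W * E i) k = Φ (W) k` for every `k` in the range of `Φ (E i)`, and consequently any
operator `B` with domain `⋃ i, range (Φ (E i))` given by `B k = Φ (W * E i) k` on the range of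
`Φ (E i)` is closable with closure the bounded operator `Φ (W)`. -/
theorem statement1
    {H K : Type} [NormedAddCommGroup H] [InnerProductSpace ℂ H] [CompleteSpace H]
    [NormedAddCommGroup K] [InnerProductSpace ℂ K] [CompleteSpace K]
    (M : VonNeumannAlgebra H) (N : VonNeumannAlgebra K)
    (Φ : M.toStarSubalgebra ≃⋆ₐ[ℂ] N.toStarSubalgebra)
    {I : Type} [Preorder I] [IsDirected I (· ≤ ·)] [Nonempty I]
    (E : I → H →L[ℂ] H) (hEmem : ∀ i, E i ∈ M.toStarSubalgebra)
    (hEsa : ∀ i, IsSelfAdjoint (E i)) (hEidem : ∀ i, E i * E i = E i)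
    (hEmono : ∀ i j, j ≤ i → E i * E j = E j ∧ E j * E i = E j)
    (hD : Dense (⋃ i, Set.range (E i) : Set H))
    (hD' : Dense (⋃ i,
      Set.range ((Φ ⟨E i, hEmem i⟩ : N.toStarSubalgebra) : K →L[ℂ] K) : Set K))
    (W : H →L[ℂ] H)
    (hWE : ∀ i, W * E i ∈ M.toStarSubalgebra)
    (hWEsa : ∀ i, IsSelfAdjoint (W * E i)) :
    ∃ hW : W ∈ M.toStarSubalgebra,
      (∀ (i : I) (k : K),
        k ∈ Set.range ((Φ ⟨E i, hEmem i⟩ : N.toStarSubalgebra) : K →L[ℂ] K) →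
        ((Φ ⟨W * E i, hWE i⟩ : N.toStarSubalgebra) : K →L[ℂ] K) k
          = ((Φ ⟨W, hW⟩ : N.toStarSubalgebra) : K →L[ℂ] K) k) ∧
      (∀ B : K →ₗ.[ℂ] K,
        (B.domain : Set K)
            = (⋃ i, Set.range ((Φ ⟨E i, hEmem i⟩ : N.toStarSubalgebra) : K →L[ℂ] K)) →
        (∀ (i : I) (k : B.domain),
          (k : K) ∈ Set.range ((Φ ⟨E i, hEmem i⟩ : N.toStarSubalgebra) : K →L[ℂ] K) →
          B k = ((Φ ⟨W * E i, hWE i⟩ : N.toStarSubalgebra) : K →L[ℂ] K) (k : K)) →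
        B.IsClosable ∧
          B.closure
            = (((Φ ⟨W, hW⟩ : N.toStarSubalgebra) : K →L[ℂ] K) : K →ₗ[ℂ] K).toPMap ⊤) := by
  obtain ⟨hW, hΦ, hB⟩ := statement1_general M
    ((MulMemClass.subtype N.toStarSubalgebra).comp (Φ : M.toStarSubalgebra →ₙ* N.toStarSubalgebra))
    (fun i ↦ ⟨E i, hEmem i⟩) (fun i ↦ Subtype.ext (hEidem i)) (hD.mono Submodule.subset_span)
    (hD'.mono Submodule.subset_span) W hWE
  exact ⟨hW, hΦ, fun B hdom ↦ hB B (B.domain.span_eq.symm.trans (congrArg _ hdom))⟩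
end
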